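/- Let ℰ be an exact structure on an abelian category 𝒜 such that 𝒜 has enough ℰ-projectives and enough ℰ-injectives, and let (𝒳,𝒴) be a pair of classes of objects of 𝒜 closed under isomorphisms and direct summands. If 𝒳 is ℰ-resolving, 𝒴 = 𝒳^⊥, and every object A of 𝒜 admits an epimorphic 𝒳-precover p : X → A with Ker p ∈ 𝒴, then (𝒳,𝒴) is a complete hereditary ℰ-cotorsion pair. -/

import Mathlib

open CategoryTheory Category Limits

universe v u

namespace ExactPaper

variable {𝒜 : Type u} [Category.{v} 𝒜] [Abelian 𝒜]

/-- A morphism is an admissible monic w.r.t. a class `c` of short complexes if it occurs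
as the first map of a member of `c`. -/
def AdmMono (c : ShortComplex 𝒜 → Prop) {X Y : 𝒜} (f : X ⟶ Y) : Prop :=
  ∃ (Z : 𝒜) (g : Y ⟶ Z) (w : f ≫ g = 0), c (ShortComplex.mk f g w)

/-- A morphism is an admissible epic w.r.t. a class `c` of short complexes if it occurs
as the second map of a member of `c`. -/
def AdmEpi (c : ShortComplex 𝒜 → Prop) {Y Z : 𝒜} (g : Y ⟶ Z) : Prop :=
  ∃ (X : 𝒜) (f : X ⟶ Y) (w : f ≫ g = 0), c (ShortComplex.mk f g w)

/-- A (Quillen) exact structure on an abelian category `𝒜`: a class of short exact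
sequences, called conflations, closed under isomorphisms, containing all split short
exact sequences, such that admissible monics and epics are closed under composition,
pushouts of admissible monics along arbitrary morphisms are admissible monics and
pullbacks of admissible epics along arbitrary morphisms are admissible epics. -/
structure ExactStructure (𝒜 : Type u) [Category.{v} 𝒜] [Abelian 𝒜] where
  conflation : ShortComplex 𝒜 → Prop
  shortExact_of_conflation : ∀ (S : ShortComplex 𝒜), conflation S → S.ShortExact
  conflation_of_iso : ∀ (S T : ShortComplex 𝒜), (S ≅ T) → conflation S → conflation T
  conflation_of_splitting : ∀ (S : ShortComplex 𝒜), S.Splitting → conflation S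
  admMono_comp : ∀ {X Y Z : 𝒜} (f : X ⟶ Y) (g : Y ⟶ Z),
    AdmMono conflation f → AdmMono conflation g → AdmMono conflation (f ≫ g)
  admEpi_comp : ∀ {X Y Z : 𝒜} (f : X ⟶ Y) (g : Y ⟶ Z),
    AdmEpi conflation f → AdmEpi conflation g → AdmEpi conflation (f ≫ g)
  admMono_pushout : ∀ {L M M' : 𝒜} (i : L ⟶ M) (f : L ⟶ M'),
    AdmMono conflation i → AdmMono conflation (pushout.inr i f)
  admEpi_pullback : ∀ {M N M' : 𝒜} (p : M ⟶ N) (g : M' ⟶ N),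
    AdmEpi conflation p → AdmEpi conflation (pullback.snd p g)

namespace ExactStructure

variable (E : ExactStructure 𝒜)

/-- An `ℰ`-projective object. -/
def EProjective (P : 𝒜) : Prop :=
  ∀ (S : ShortComplex 𝒜), E.conflation S → ∀ h : P ⟶ S.X₃, ∃ k : P ⟶ S.X₂, k ≫ S.g = h

/-- An `ℰ`-injective object. -/
def EInjective (I : 𝒜) : Prop :=
  ∀ (S : ShortComplex 𝒜), E.conflation S → ∀ h : S.X₁ ⟶ I, ∃ k : S.X₂ ⟶ I, S.f ≫ k = h

/-- `𝒜` has enough `ℰ`-projectives. -/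
def EnoughProjectives : Prop :=
  ∀ M : 𝒜, ∃ (K P : 𝒜) (i : K ⟶ P) (p : P ⟶ M) (w : i ≫ p = 0),
    E.conflation (ShortComplex.mk i p w) ∧ E.EProjective P

/-- `𝒜` has enough `ℰ`-injectives. -/
def EnoughInjectives : Prop :=
  ∀ M : 𝒜, ∃ (I C : 𝒜) (i : M ⟶ I) (p : I ⟶ C) (w : i ≫ p = 0),
    E.conflation (ShortComplex.mk i p w) ∧ E.EInjective I

/-- `Ext¹_ℰ(M,N) = 0`: every conflation `0 → N → Z → M → 0` splits. -/
def Ext1Zero (M N : 𝒜) : Prop :=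
  ∀ (Z : 𝒜) (i : N ⟶ Z) (p : Z ⟶ M) (w : i ≫ p = 0),
    E.conflation (ShortComplex.mk i p w) → ∃ r : Z ⟶ N, i ≫ r = 𝟙 N

/-- The right `ℰ`-orthogonal class `𝒳^⊥`. -/
def rightPerp (𝒳 : Set 𝒜) : Set 𝒜 := {N | ∀ X ∈ 𝒳, E.Ext1Zero X N}

/-- The left `ℰ`-orthogonal class `^⊥𝒴`. -/
def leftPerp (𝒴 : Set 𝒜) : Set 𝒜 := {M | ∀ Y ∈ 𝒴, E.Ext1Zero M Y}

/-- A class is closed under `ℰ`-extensions. -/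
def ClosedUnderExtensions (𝒯 : Set 𝒜) : Prop :=
  ∀ S : ShortComplex 𝒜, E.conflation S → S.X₁ ∈ 𝒯 → S.X₃ ∈ 𝒯 → S.X₂ ∈ 𝒯

/-- An `ℰ`-resolving class. -/
def Resolving (𝒯 : Set 𝒜) : Prop :=
  (∀ P : 𝒜, E.EProjective P → P ∈ 𝒯) ∧ E.ClosedUnderExtensions 𝒯 ∧
    ∀ S : ShortComplex 𝒜, E.conflation S → S.X₂ ∈ 𝒯 → S.X₃ ∈ 𝒯 → S.X₁ ∈ 𝒯

/-- An `ℰ`-coresolving class. -/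
def Coresolving (𝒯 : Set 𝒜) : Prop :=
  (∀ I : 𝒜, E.EInjective I → I ∈ 𝒯) ∧ E.ClosedUnderExtensions 𝒯 ∧
    ∀ S : ShortComplex 𝒜, E.conflation S → S.X₁ ∈ 𝒯 → S.X₂ ∈ 𝒯 → S.X₃ ∈ 𝒯

/-- `(𝒳,𝒴)` is a complete hereditary `ℰ`-cotorsion pair. -/
def CompleteHereditaryCotorsionPair (𝒳 𝒴 : Set 𝒜) : Prop :=
  𝒳 = E.leftPerp 𝒴 ∧ 𝒴 = E.rightPerp 𝒳 ∧
  (∀ A : 𝒜, ∃ (Y X : 𝒜) (i : Y ⟶ X) (p : X ⟶ A) (w : i ≫ p = 0),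
      E.conflation (ShortComplex.mk i p w) ∧ X ∈ 𝒳 ∧ Y ∈ 𝒴) ∧
  (∀ A : 𝒜, ∃ (Y' X' : 𝒜) (i : A ⟶ Y') (p : Y' ⟶ X') (w : i ≫ p = 0),
      E.conflation (ShortComplex.mk i p w) ∧ X' ∈ 𝒳 ∧ Y' ∈ 𝒴) ∧
  E.Resolving 𝒳

end ExactStructure

/-- `f : X ⟶ A` is an `𝒳`-precover of `A`. -/
def IsPrecover (𝒳 : Set 𝒜) {X A : 𝒜} (f : X ⟶ A) : Prop :=
  X ∈ 𝒳 ∧ ∀ X' : 𝒜, X' ∈ 𝒳 → ∀ g : X' ⟶ A, ∃ h : X' ⟶ X, h ≫ f = g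

/-- `f : X ⟶ A` is an `𝒳`-cover of `A`. -/
def IsCover (𝒳 : Set 𝒜) {X A : 𝒜} (f : X ⟶ A) : Prop :=
  IsPrecover 𝒳 f ∧ ∀ h : X ⟶ X, h ≫ f = f → IsIso h

/-- `f : A ⟶ Y` is a `𝒴`-preenvelope of `A`. -/
def IsPreenvelope (𝒴 : Set 𝒜) {A Y : 𝒜} (f : A ⟶ Y) : Prop :=
  Y ∈ 𝒴 ∧ ∀ Y' : 𝒜, Y' ∈ 𝒴 → ∀ g : A ⟶ Y', ∃ h : Y ⟶ Y', f ≫ h = g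

/-- `f : A ⟶ Y` is a `𝒴`-envelope of `A`. -/
def IsEnvelope (𝒴 : Set 𝒜) {A Y : 𝒜} (f : A ⟶ Y) : Prop :=
  IsPreenvelope 𝒴 f ∧ ∀ h : Y ⟶ Y, f ≫ h = f → IsIso h

/-- A class of objects closed under isomorphisms. -/
def ClosedUnderIsos (𝒳 : Set 𝒜) : Prop := ∀ X Y : 𝒜, (X ≅ Y) → X ∈ 𝒳 → Y ∈ 𝒳

/-- A class of objects closed under direct summands. -/
def ClosedUnderDirectSummands (𝒳 : Set 𝒜) : Prop :=
  ∀ X Y : 𝒜, (∃ (s : Y ⟶ X) (r : X ⟶ Y), s ≫ r = 𝟙 Y) → X ∈ 𝒳 → Y ∈ 𝒳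

end ExactPaper

namespace ExactPaper

namespace ExactStructure

variable {𝒜 : Type u} [Category.{v} 𝒜] [Abelian 𝒜] (E : ExactStructure 𝒜)

/-- A cokernel of an admissible monic completes it to a conflation. -/
lemma conflation_of_admMono {X Y Z : 𝒜} (f : X ⟶ Y) (g : Y ⟶ Z) (w : f ≫ g = 0)
    (hf : AdmMono E.conflation f) (hg : Epi g)
    (hd : ∀ (T : 𝒜) (k : Y ⟶ T), f ≫ k = 0 → ∃ l : Z ⟶ T, g ≫ l = k) :
    E.conflation (ShortComplex.mk f g w) := by
  obtain ⟨Z', g', w', hc⟩ := hf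
  have hs := E.shortExact_of_conflation _ hc
  have hg' : Epi g' := hs.epi_g
  obtain ⟨l, hl⟩ := hd Z' g' w'
  have : Epi (ShortComplex.mk f g' w').g := hg'
  obtain ⟨l', hl'⟩ := hs.exact.desc' g w
  dsimp at l' hl'
  let e : Z' ≅ Z :=
    { hom := l'
      inv := l
      hom_inv_id := by rw [← cancel_epi g', reassoc_of% hl', hl, comp_id]
      inv_hom_id := by rw [← cancel_epi g, reassoc_of% hl, hl', comp_id] }
  exact E.conflation_of_iso (ShortComplex.mk f g' w') (ShortComplex.mk f g w)
    (ShortComplex.isoMk (Iso.refl _) (Iso.refl _) e (by simp) (by simp [e, hl'])) hc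

/-- A kernel of an admissible epic completes it to a conflation. -/
lemma conflation_of_admEpi {X Y Z : 𝒜} (f : X ⟶ Y) (g : Y ⟶ Z) (w : f ≫ g = 0)
    (hg : AdmEpi E.conflation g) (hf : Mono f)
    (hd : ∀ (T : 𝒜) (k : T ⟶ Y), k ≫ g = 0 → ∃ l : T ⟶ X, l ≫ f = k) :
    E.conflation (ShortComplex.mk f g w) := by
  obtain ⟨X', f', w', hc⟩ := hg
  have hs := E.shortExact_of_conflation _ hc
  have hf' : Mono f' := hs.mono_f
  obtain ⟨l, hl⟩ := hd X' f' w'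
  have : Mono (ShortComplex.mk f' g w').f := hf'
  obtain ⟨l', hl'⟩ := hs.exact.lift' f w
  dsimp at l' hl'
  let e : X' ≅ X :=
    { hom := l
      inv := l'
      hom_inv_id := by rw [← cancel_mono f', assoc, hl', hl, id_comp]
      inv_hom_id := by rw [← cancel_mono f, assoc, hl, hl', id_comp] }
  exact E.conflation_of_iso (ShortComplex.mk f' g w') (ShortComplex.mk f g w)
    (ShortComplex.isoMk e (Iso.refl _) (Iso.refl _) (by simp [e, hl]) (by simp)) hc

/-- Pushout of a conflation. -/
lemma conflation_pushout {K P A N : 𝒜} (i : K ⟶ P) (p : P ⟶ A) (w : i ≫ p = 0)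
    (hc : E.conflation (ShortComplex.mk i p w)) (f : K ⟶ N) :
    E.conflation (ShortComplex.mk (pushout.inr i f)
      (pushout.desc p 0 (by simp [w])) (pushout.inr_desc _ _ _)) := by
  have hs := E.shortExact_of_conflation _ hc
  have hp : Epi p := hs.epi_g
  apply E.conflation_of_admMono
  · exact E.admMono_pushout i f ⟨_, _, _, hc⟩
  · have : Epi (pushout.inl i f ≫ pushout.desc p (0 : N ⟶ A) (by simp [w])) := by
      rw [pushout.inl_desc]; exact hp
    exact epi_of_epi (pushout.inl i f) _
  · intro T k hk
    have : Epi (ShortComplex.mk i p w).g := hp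
    obtain ⟨l, hl⟩ := hs.exact.desc' (pushout.inl i f ≫ k)
      (by dsimp; rw [pushout.condition_assoc, hk, comp_zero])
    refine ⟨l, ?_⟩
    apply pushout.hom_ext
    · rw [pushout.inl_desc_assoc]; exact hl
    · rw [pushout.inr_desc_assoc, zero_comp, hk]

/-- Isomorphisms are admissible epics. -/
lemma admEpi_of_iso {X Y : 𝒜} (e : X ≅ Y) : AdmEpi E.conflation e.hom := by
  refine ⟨kernel (𝟙 Y), 0, zero_comp, E.conflation_of_splitting _
    { r := 0, s := e.inv, f_r := ?_, s_g := ?_, id := ?_ }⟩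
  · rw [← cancel_mono (kernel.ι (𝟙 Y))]
    simp only [kernel.ι_of_mono, comp_zero]
  · simp
  · simp

/-- Pullback of a conflation. -/
lemma conflation_pullback {Y X C I Z : 𝒜} (i : Y ⟶ X) (p : X ⟶ C) (w : i ≫ p = 0)
    (hc : E.conflation (ShortComplex.mk i p w)) {fst : Z ⟶ X} {snd : Z ⟶ I} {g : I ⟶ C}
    (sq : IsPullback fst snd p g) :
    ∃ (j : Y ⟶ Z) (w' : j ≫ snd = 0), E.conflation (ShortComplex.mk j snd w') := by
  have hs := E.shortExact_of_conflation _ hc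
  have hi : Mono i := hs.mono_f
  refine ⟨sq.lift i 0 (by simp [w]), by simp, ?_⟩
  apply E.conflation_of_admEpi
  · have := E.admEpi_comp _ _ (E.admEpi_of_iso sq.isoPullback)
      (E.admEpi_pullback p g ⟨_, _, _, hc⟩)
    simpa using this
  · have : Mono (sq.lift i (0 : Y ⟶ I) (by simp [w]) ≫ fst) := by
      rw [sq.lift_fst]; exact hi
    exact mono_of_mono _ fst
  · intro T k hk
    have : Mono (ShortComplex.mk i p w).f := hi
    obtain ⟨l, hl⟩ := hs.exact.lift' (k ≫ fst)
      (by dsimp; rw [assoc, sq.w, reassoc_of% hk, zero_comp])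
    refine ⟨l, ?_⟩
    apply sq.hom_ext
    · rw [assoc, sq.lift_fst]; exact hl
    · rw [assoc, sq.lift_snd, comp_zero, hk]

/-- Vanishing of `Ext¹` gives extension of morphisms along admissible monics. -/
lemma Ext1Zero.extend {E : ExactStructure 𝒜} {M N : 𝒜} (h : E.Ext1Zero M N) {K P : 𝒜}
    (i : K ⟶ P) (p : P ⟶ M) (w : i ≫ p = 0)
    (hc : E.conflation (ShortComplex.mk i p w)) (f : K ⟶ N) : ∃ t : P ⟶ N, i ≫ t = f := by
  obtain ⟨r, hr⟩ := h _ _ _ _ (E.conflation_pushout i p w hc f)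
  exact ⟨pushout.inl i f ≫ r, by rw [pushout.condition_assoc, hr, comp_id]⟩

/-- `Ext¹` vanishes if morphisms extend along one projective presentation. -/
lemma ext1Zero_of_extend {M N K P : 𝒜} (i : K ⟶ P) (p : P ⟶ M) (w : i ≫ p = 0)
    (hc : E.conflation (ShortComplex.mk i p w)) (hP : E.EProjective P)
    (hext : ∀ f : K ⟶ N, ∃ t : P ⟶ N, i ≫ t = f) : E.Ext1Zero M N := by
  intro Z j q w' hc'
  have hs := E.shortExact_of_conflation _ hc
  have hs' := E.shortExact_of_conflation _ hc'
  have hp : Epi p := hs.epi_g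
  have hj : Mono j := hs'.mono_f
  have : Epi (ShortComplex.mk i p w).g := hp
  have : Mono (ShortComplex.mk j q w').f := hj
  obtain ⟨a, ha⟩ := hP _ hc' p
  dsimp at a ha
  obtain ⟨b, hb⟩ := hs'.exact.lift' (i ≫ a) (by dsimp; rw [assoc, ha, w])
  dsimp at b hb
  obtain ⟨t, ht⟩ := hext b
  obtain ⟨s, hsec⟩ := hs.exact.desc' (a - t ≫ j)
    (by dsimp; rw [Preadditive.comp_sub, reassoc_of% ht, hb, sub_self])
  dsimp at s hsec
  have hsq : s ≫ q = 𝟙 M := by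
    rw [← cancel_epi p, reassoc_of% hsec, Preadditive.sub_comp, ha, assoc, w', comp_zero,
      sub_zero, comp_id]
  obtain ⟨r, hr⟩ := hs'.exact.lift' (𝟙 Z - q ≫ s)
    (by dsimp; rw [Preadditive.sub_comp, assoc, hsq, id_comp, comp_id, sub_self])
  dsimp at r hr
  refine ⟨r, ?_⟩
  rw [← cancel_mono j, assoc, hr, Preadditive.comp_sub, reassoc_of% w', zero_comp, sub_zero,
    comp_id, id_comp]

/-- The right orthogonal of a class is closed under extensions. -/
lemma rightPerp_closedUnderExtensions (hproj : E.EnoughProjectives) (𝒳 : Set 𝒜) :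
    E.ClosedUnderExtensions (E.rightPerp 𝒳) := by
  intro S hS h1 h3 X hX
  obtain ⟨K, P, i, p, w, hc, hP⟩ := hproj X
  apply E.ext1Zero_of_extend i p w hc hP
  intro f
  have hs := E.shortExact_of_conflation _ hS
  have := hs.mono_f
  obtain ⟨t, ht⟩ := (h3 X hX).extend i p w hc (f ≫ S.g)
  obtain ⟨u, hu⟩ := hP S hS t
  obtain ⟨b, hb⟩ := hs.exact.lift' (f - i ≫ u)
    (by rw [Preadditive.sub_comp, assoc, hu, ht, sub_self])
  obtain ⟨c, hcc⟩ := (h1 X hX).extend i p w hc b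
  exact ⟨u + c ≫ S.f, by
    rw [Preadditive.comp_add, reassoc_of% hcc, hb, add_sub_cancel]⟩

/-- An epimorphic precover is an admissible epic. -/
lemma conflation_of_factor {K P A X : 𝒜} (i : K ⟶ P) (q : P ⟶ A) (w : i ≫ q = 0)
    (hc : E.conflation (ShortComplex.mk i q w)) (p : X ⟶ A) [Epi p] (h : P ⟶ X)
    (hh : h ≫ p = q) :
    E.conflation (ShortComplex.mk (kernel.ι p) p (kernel.condition p)) := by
  have hk : (i ≫ h) ≫ p = 0 := by rw [assoc, hh, w]
  have hc' := E.conflation_pushout i q w hc (kernel.lift p (i ≫ h) hk)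
  let φ : ShortComplex.mk (pushout.inr i (kernel.lift p (i ≫ h) hk))
      (pushout.desc q 0 (by simp [w])) (pushout.inr_desc _ _ _) ⟶
      ShortComplex.mk (kernel.ι p) p (kernel.condition p) :=
    { τ₁ := 𝟙 _
      τ₂ := pushout.desc h (kernel.ι p) (by simp)
      τ₃ := 𝟙 _
      comm₁₂ := by
        dsimp only
        rw [pushout.inr_desc, id_comp]
      comm₂₃ := by
        dsimp only
        rw [comp_id]
        apply pushout.hom_ext
        · rw [pushout.inl_desc_assoc, pushout.inl_desc, hh]
        · rw [pushout.inr_desc_assoc, pushout.inr_desc, kernel.condition] }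
  have hse : (ShortComplex.mk (kernel.ι p) p (kernel.condition p)).ShortExact :=
    { exact := ShortComplex.exact_of_f_is_kernel _ (kernelIsKernel p)
      mono_f := by dsimp; infer_instance
      epi_g := by dsimp; infer_instance }
  have h1 : IsIso φ.τ₁ := by dsimp [φ]; infer_instance
  have h3 : IsIso φ.τ₃ := by dsimp [φ]; infer_instance
  have h2 : IsIso φ.τ₂ := ShortComplex.isIso₂_of_shortExact_of_isIso₁₃ φ
    (E.shortExact_of_conflation _ hc') hse
  have : IsIso φ := ShortComplex.isIso_of_isIso φ
  exact E.conflation_of_iso _ _ (asIso φ) hc'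

end ExactStructure

end ExactPaper

open ExactPaper CategoryTheory Limits in
/-- **Theorem 3.4, (1) ⇒ (3)**: if `𝒳` is `ℰ`-resolving, `𝒴 = 𝒳^⊥`, and every object
admits an epimorphic `𝒳`-precover with kernel in `𝒴`, then `(𝒳,𝒴)` is a complete
hereditary `ℰ`-cotorsion pair. -/
theorem completeHereditaryCotorsionPair_of_resolving
    {𝒜 : Type u} [Category.{v} 𝒜] [Abelian 𝒜]
    (E : ExactStructure 𝒜)
    (hproj : E.EnoughProjectives) (hinj : E.EnoughInjectives)
    (𝒳 𝒴 : Set 𝒜)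
    (hXiso : ClosedUnderIsos 𝒳) (hXsum : ClosedUnderDirectSummands 𝒳)
    (hYiso : ClosedUnderIsos 𝒴) (hYsum : ClosedUnderDirectSummands 𝒴)
    (hres : E.Resolving 𝒳) (hperp : 𝒴 = E.rightPerp 𝒳)
    (hcov : ∀ A : 𝒜, ∃ (X : 𝒜) (p : X ⟶ A),
      Epi p ∧ IsPrecover 𝒳 p ∧ kernel p ∈ 𝒴) :
    E.CompleteHereditaryCotorsionPair 𝒳 𝒴 := by
  have hA : ∀ A : 𝒜, ∃ (Y X : 𝒜) (i : Y ⟶ X) (p : X ⟶ A) (w : i ≫ p = 0),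
      E.conflation (ShortComplex.mk i p w) ∧ X ∈ 𝒳 ∧ Y ∈ 𝒴 := by
    intro A
    obtain ⟨X, p, hp, ⟨hX, hfac⟩, hK⟩ := hcov A
    obtain ⟨K, P, i, q, w, hc, hP⟩ := hproj A
    obtain ⟨h, hh⟩ := hfac P (hres.1 P hP) q
    exact ⟨_, X, kernel.ι p, p, kernel.condition p, E.conflation_of_factor i q w hc p h hh, hX, hK⟩
  refine ⟨?_, hperp, hA, ?_, hres⟩
  · apply Set.Subset.antisymm
    · intro X hX Y hY
      rw [hperp] at hY
      exact hY X hX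
    · intro M hM
      obtain ⟨Y, X, i, p, w, hc, hX, hY⟩ := hA M
      obtain ⟨r, hr⟩ := hM Y hY X i p w hc
      have hs := E.shortExact_of_conflation _ hc
      have hp : Epi p := hs.epi_g
      have : Epi (ShortComplex.mk i p w).g := hp
      obtain ⟨s, hsec⟩ := hs.exact.desc' (𝟙 X - r ≫ i)
        (by dsimp; rw [Preadditive.comp_sub, reassoc_of% hr, comp_id, sub_self])
      dsimp at s hsec
      refine hXsum X M ⟨s, p, ?_⟩ hX
      rw [← cancel_epi p, reassoc_of% hsec, Preadditive.sub_comp, assoc, w, comp_zero,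
        sub_zero, id_comp, comp_id]
  · intro A
    obtain ⟨I, C, a, b, w, hc, hI⟩ := hinj A
    obtain ⟨Y, X, i, p, w', hc', hX, hY⟩ := hA C
    obtain ⟨j, wj, hj⟩ := E.conflation_pullback a b w hc (IsPullback.of_hasPullback b p)
    obtain ⟨k, wk, hk⟩ := E.conflation_pullback i p w' hc' (IsPullback.of_hasPullback b p).flip
    refine ⟨_, X, j, _, wj, hj, hX, ?_⟩
    have hI' : I ∈ 𝒴 := by
      rw [hperp]
      intro X' _ Z f g wf hf
      exact hI _ hf (𝟙 I)
    rw [hperp] at hY hI' ⊢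
    exact E.rightPerp_closedUnderExtensions hproj 𝒳 _ hk hY hI'
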